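/- arXiv:2006.14720 — 4 statements merged into one kernel-verified Lean document; each statement's English description precedes it below -/
import Mathlib

section
/- Let Ω ⊂ ℝ^d be an open bounded set, γ > 0, η > 0, and let u, v, φ : ℝ^d → ℝ be C¹ functions which are bounded with bounded gradients. Assume φ ≤ 0 and v + φ ≥ 0 on Ω, and assume the minimality condition: for every ζ ∈ [0,1], 𝓔(u,v) + 𝓗(v) ≤ 𝓔(u, v+ζφ) + 𝓗(v+ζφ). Then ∫_Ω vφ|∇u|² dx + ∫_Ω (−1/(2γ))(1−v)φ + 2γ ∇v·∇φ dx ≥ 0. -/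
open MeasureTheory RealInnerProductSpace

/-- The elastic part of the regularized fracture energy:
`𝓔(u,v) = (1/2)∫_Ω (v² + η)|∇u|² dx`. -/
noncomputable def fractureE {d : ℕ} (Ω : Set (EuclideanSpace ℝ (Fin d))) (η : ℝ)
    (u v : EuclideanSpace ℝ (Fin d) → ℝ) : ℝ :=
  (1/2) * ∫ x in Ω, ((v x)^2 + η) * ‖gradient u x‖^2

/-- The surface part of the regularized fracture energy:
`𝓗(v) = ∫_Ω (1/(4γ))(1−v)² + γ|∇v|² dx`. -/
noncomputable def fractureH {d : ℕ} (Ω : Set (EuclideanSpace ℝ (Fin d))) (γ : ℝ)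
    (v : EuclideanSpace ℝ (Fin d) → ℝ) : ℝ :=
  ∫ x in Ω, (1/(4*γ)) * (1 - v x)^2 + γ * ‖gradient v x‖^2

theorem stmt_1 {d : ℕ} (Ω : Set (EuclideanSpace ℝ (Fin d)))
    (hΩopen : IsOpen Ω) (hΩbd : Bornology.IsBounded Ω)
    (γ η : ℝ) (hγ : 0 < γ) (hη : 0 < η)
    (u v φ : EuclideanSpace ℝ (Fin d) → ℝ)
    (hu : ContDiff ℝ 1 u) (hv : ContDiff ℝ 1 v) (hφ : ContDiff ℝ 1 φ)
    (Cu Cv Cφ : ℝ)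
    (hub : ∀ x, |u x| ≤ Cu) (hugb : ∀ x, ‖gradient u x‖ ≤ Cu)
    (hvb : ∀ x, |v x| ≤ Cv) (hvgb : ∀ x, ‖gradient v x‖ ≤ Cv)
    (hφb : ∀ x, |φ x| ≤ Cφ) (hφgb : ∀ x, ‖gradient φ x‖ ≤ Cφ)
    (hφneg : ∀ x ∈ Ω, φ x ≤ 0) (hvφpos : ∀ x ∈ Ω, 0 ≤ v x + φ x)
    (hmin : ∀ ζ ∈ Set.Icc (0:ℝ) 1,
      fractureE Ω η u v + fractureH Ω γ v ≤
        fractureE Ω η u (fun x => v x + ζ * φ x)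
          + fractureH Ω γ (fun x => v x + ζ * φ x)) :
    0 ≤ (∫ x in Ω, v x * φ x * ‖gradient u x‖^2)
        + ∫ x in Ω, (-1/(2*γ)) * (1 - v x) * φ x
            + 2*γ * ⟪gradient v x, gradient φ x⟫ := by
  have hInteg : ∀ f : EuclideanSpace ℝ (Fin d) → ℝ, Continuous f →
      Integrable f (volume.restrict Ω) := by
    intro f hf
    have hc : IsCompact (closure Ω) := hΩbd.isCompact_closure
    exact (hf.continuousOn.integrableOn_compact hc).mono_set subset_closure
  have hgrad : ∀ f : EuclideanSpace ℝ (Fin d) → ℝ, ContDiff ℝ 1 f →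
      Continuous (gradient f) := by
    intro f hf
    have h1 : Continuous (fderiv ℝ f) := hf.continuous_fderiv one_ne_zero
    exact (InnerProductSpace.toDual ℝ (EuclideanSpace ℝ (Fin d))).symm.continuous.comp h1
  have cu := hgrad u hu
  have cv := hgrad v hv
  have cφ := hgrad φ hφ
  have cv0 := hv.continuous
  have cφ0 := hφ.continuous
  have hg : ∀ (ζ : ℝ) x, gradient (fun x => v x + ζ * φ x) x
      = gradient v x + ζ • gradient φ x := by
    intro ζ x
    have h1 := (hv.differentiable one_ne_zero x).hasFDerivAt
    have h2 := (hφ.differentiable one_ne_zero x).hasFDerivAt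
    have h3 := (h1.add (h2.const_mul ζ)).fderiv
    change fderiv ℝ (fun x => v x + ζ * φ x) x = _ at h3
    simp only [gradient, h3, map_add, map_smul]
  have hE : ∀ ζ : ℝ, fractureE Ω η u (fun x => v x + ζ * φ x) = fractureE Ω η u v
      + ζ * (∫ x in Ω, v x * φ x * ‖gradient u x‖^2)
      + ζ^2 * (∫ x in Ω, (1/2) * (φ x)^2 * ‖gradient u x‖^2) := by
    intro ζ
    unfold fractureE
    rw [← integral_const_mul, ← integral_const_mul, ← integral_const_mul, ← integral_const_mul,
      ← integral_add, ← integral_add]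
    · congr 1
      ext x
      ring
    all_goals exact hInteg _ (by fun_prop)
  have hH : ∀ ζ : ℝ, fractureH Ω γ (fun x => v x + ζ * φ x) = fractureH Ω γ v
      + ζ * (∫ x in Ω, (-1/(2*γ)) * (1 - v x) * φ x
            + 2*γ * ⟪gradient v x, gradient φ x⟫)
      + ζ^2 * (∫ x in Ω, (1/(4*γ)) * (φ x)^2 + γ * ‖gradient φ x‖^2) := by
    intro ζ
    unfold fractureH
    rw [← integral_const_mul, ← integral_const_mul, ← integral_add, ← integral_add]
    · congr 1
      ext x
      rw [hg, norm_add_sq_real, inner_smul_right, norm_smul, mul_pow, Real.norm_eq_abs, sq_abs]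
      field_simp
      ring
    all_goals exact hInteg _ (by fun_prop)
  set A := ∫ x in Ω, v x * φ x * ‖gradient u x‖^2
  set B := ∫ x in Ω, (-1/(2*γ)) * (1 - v x) * φ x + 2*γ * ⟪gradient v x, gradient φ x⟫
  set K := ∫ x in Ω, (1/2) * (φ x)^2 * ‖gradient u x‖^2
  set M := ∫ x in Ω, (1/(4*γ)) * (φ x)^2 + γ * ‖gradient φ x‖^2
  have key : ∀ ζ : ℝ, 0 < ζ → ζ ≤ 1 → 0 ≤ (A + B) + ζ * (K + M) := by
    intro ζ h0 h1
    have h := hmin ζ ⟨h0.le, h1⟩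
    rw [hE, hH] at h
    have h2 : 0 ≤ ζ * ((A + B) + ζ * (K + M)) := by linarith
    exact nonneg_of_mul_nonneg_right h2 h0
  have ht : Filter.Tendsto (fun ζ : ℝ => (A + B) + ζ * (K + M))
      (nhdsWithin 0 (Set.Ioi 0)) (nhds (A + B)) := by
    have hc : Continuous (fun ζ : ℝ => (A + B) + ζ * (K + M)) := by fun_prop
    have := hc.tendsto 0
    simp only [zero_mul, add_zero] at this
    exact this.mono_left nhdsWithin_le_nhds
  refine ge_of_tendsto ht ?_
  filter_upwards [Ioc_mem_nhdsGT (zero_lt_one (α := ℝ))] with ζ hζ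
  exact key ζ hζ.1 hζ.2
end

section
/- Let Y ⊂ ℝ^d be a bounded measurable set of positive Lebesgue measure |Y|, and let z_1, …, z_d : ℝ^d → ℝ be C¹, ℤ^d-periodic functions with bounded gradients such that for each i, ∫_Y (∇z_i(y) − e_i)·∇φ(y) dy = 0 for every ℤ^d-periodic C¹ function φ with bounded gradient. Define the homogenized matrix M_0 by (M_0)_{ij} = δ_{ij} − (1/|Y|) ∫_Y ∂_{y_i} z_j(y) dy. Then M_0 is a symmetric matrix. -/
open MeasureTheory RealInnerProductSpace

/-- A function `f : ℝ^d → ℝ` is `ℤ^d`-periodic if `f (y + k) = f y` for every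
integer translation vector `k ∈ ℤ^d`. -/
def ZdPeriodic {d : ℕ} (f : EuclideanSpace ℝ (Fin d) → ℝ) : Prop :=
  ∀ (y : EuclideanSpace ℝ (Fin d)) (k : Fin d → ℤ),
    f (y + (EuclideanSpace.equiv (Fin d) ℝ).symm (fun i => (k i : ℝ))) = f y

theorem stmt_5 {d : ℕ} (Y : Set (EuclideanSpace ℝ (Fin d)))
    (hYm : MeasurableSet Y) (hYbd : Bornology.IsBounded Y) (hYpos : 0 < volume Y)
    (z : Fin d → EuclideanSpace ℝ (Fin d) → ℝ)
    (hz : ∀ i, ContDiff ℝ 1 (z i)) (hzper : ∀ i, ZdPeriodic (z i))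
    (Cz : ℝ) (hzgb : ∀ i y, ‖gradient (z i) y‖ ≤ Cz)
    (hcell : ∀ (i : Fin d) (φ : EuclideanSpace ℝ (Fin d) → ℝ),
      ContDiff ℝ 1 φ → ZdPeriodic φ → (∃ C, ∀ y, ‖gradient φ y‖ ≤ C) →
      (∫ y in Y, ⟪gradient (z i) y - EuclideanSpace.single i 1, gradient φ y⟫) = 0)
    (M₀ : Matrix (Fin d) (Fin d) ℝ)
    (hM₀ : ∀ i j, M₀ i j =
      (if i = j then (1:ℝ) else 0) - ((volume Y).toReal)⁻¹ * ∫ y in Y, gradient (z j) y i) :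
    ∀ i j, M₀ i j = M₀ j i := by
  have hfin : volume Y ≠ ⊤ := hYbd.measure_lt_top.ne
  haveI : IsFiniteMeasure (volume.restrict Y) :=
    ⟨by rw [Measure.restrict_apply_univ]; exact hYbd.measure_lt_top⟩
  have hc : ∀ i, Continuous (gradient (z i)) := fun i =>
    (InnerProductSpace.toDual ℝ (EuclideanSpace ℝ (Fin d))).symm.continuous.comp
      ((hz i).continuous_fderiv (by norm_num))
  have key : ∀ i j, (∫ y in Y, gradient (z j) y i)
      = ∫ y in Y, ⟪gradient (z i) y, gradient (z j) y⟫ := by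
    intro i j
    have h := hcell i (z j) (hz j) (hzper j) ⟨Cz, hzgb j⟩
    have hint1 : Integrable (fun y => ⟪gradient (z i) y, gradient (z j) y⟫)
        (volume.restrict Y) := by
      refine Integrable.of_bound ((hc i).inner (hc j)).aestronglyMeasurable (Cz * Cz)
        (Filter.Eventually.of_forall fun y => ?_)
      refine (norm_inner_le_norm _ _).trans ?_
      exact mul_le_mul (hzgb i y) (hzgb j y) (norm_nonneg _)
        ((norm_nonneg _).trans (hzgb i y))
    have hint2 : Integrable (fun y => gradient (z j) y i) (volume.restrict Y) := by
      refine Integrable.of_bound (Continuous.aestronglyMeasurable ?_) Cz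
        (Filter.Eventually.of_forall fun y => ?_)
      · have := hc j
        fun_prop
      · exact (PiLp.norm_apply_le _ i).trans (hzgb j y)
    have e : ∀ y, ⟪gradient (z i) y - EuclideanSpace.single i 1, gradient (z j) y⟫
        = ⟪gradient (z i) y, gradient (z j) y⟫ - gradient (z j) y i := by
      intro y
      rw [inner_sub_left, EuclideanSpace.inner_single_left]
      simp
    simp only [e] at h
    rw [integral_sub hint1 hint2] at h
    linarith
  intro i j
  rw [hM₀ i j, hM₀ j i, key i j, key j i]
  simp only [eq_comm (a := i) (b := j), real_inner_comm]
end

section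
/- Let Y ⊂ ℝ^d be a bounded measurable set of positive Lebesgue measure |Y|, and let z_1, …, z_d : ℝ^d → ℝ be C¹, ℤ^d-periodic functions with bounded gradients such that for each i, ∫_Y (∇z_i(y) − e_i)·∇φ(y) dy = 0 for every ℤ^d-periodic C¹ function φ with bounded gradient. Define (M_0)_{ij} = δ_{ij} − (1/|Y|) ∫_Y ∂_{y_i} z_j(y) dy. Then for every vector ξ ∈ ℝ^d: ∫_Y |ξ − Σ_{i=1}^d ξ_i ∇z_i(y)|² dy = |Y| · (ξ · M_0 ξ). -/
open MeasureTheory RealInnerProductSpace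

theorem stmt_6 {d : ℕ} (Y : Set (EuclideanSpace ℝ (Fin d)))
    (hYm : MeasurableSet Y) (hYbd : Bornology.IsBounded Y) (hYpos : 0 < volume Y)
    (z : Fin d → EuclideanSpace ℝ (Fin d) → ℝ)
    (hz : ∀ i, ContDiff ℝ 1 (z i)) (hzper : ∀ i, ZdPeriodic (z i))
    (Cz : ℝ) (hzgb : ∀ i y, ‖gradient (z i) y‖ ≤ Cz)
    (hcell : ∀ (i : Fin d) (φ : EuclideanSpace ℝ (Fin d) → ℝ),
      ContDiff ℝ 1 φ → ZdPeriodic φ → (∃ C, ∀ y, ‖gradient φ y‖ ≤ C) →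
      (∫ y in Y, ⟪gradient (z i) y - EuclideanSpace.single i 1, gradient φ y⟫) = 0)
    (M₀ : Matrix (Fin d) (Fin d) ℝ)
    (hM₀ : ∀ i j, M₀ i j =
      (if i = j then (1:ℝ) else 0) - ((volume Y).toReal)⁻¹ * ∫ y in Y, gradient (z j) y i) :
    ∀ ξ : Fin d → ℝ,
      (∫ y in Y, ∑ k, (ξ k - ∑ i, ξ i * gradient (z i) y k)^2)
        = (volume Y).toReal * ∑ i, (∑ j, M₀ i j * ξ j) * ξ i := by
  intro ξ
  have hfin : volume Y < ⊤ := hYbd.measure_lt_top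
  have : IsFiniteMeasure (volume.restrict Y) := ⟨by simpa using hfin⟩
  have hcont : ∀ i, Continuous (fun y => gradient (z i) y) := by
    intro i
    have h := (hz i).continuous_fderiv (by norm_num)
    exact (InnerProductSpace.toDual ℝ (EuclideanSpace ℝ (Fin d))).symm.continuous.comp h
  have hint1 : ∀ i j, Integrable (fun y => gradient (z j) y i) (volume.restrict Y) := by
    intro i j
    have hc : Continuous (fun y => gradient (z j) y i) := by
      have := hcont j
      fun_prop
    refine Integrable.of_bound hc.aestronglyMeasurable Cz (Filter.Eventually.of_forall fun y => ?_)
    exact (PiLp.norm_apply_le _ _).trans (hzgb j y)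
  have hint2 : ∀ i j, Integrable (fun y =>
      ⟪gradient (z i) y - EuclideanSpace.single i (1:ℝ), gradient (z j) y⟫) (volume.restrict Y) := by
    intro i j
    have hc : Continuous (fun y =>
        ⟪gradient (z i) y - EuclideanSpace.single i (1:ℝ), gradient (z j) y⟫) :=
      ((hcont i).sub continuous_const).inner (hcont j)
    refine Integrable.of_bound hc.aestronglyMeasurable ((Cz + 1) * Cz)
      (Filter.Eventually.of_forall fun y => ?_)
    have h1 : ‖gradient (z i) y - EuclideanSpace.single i (1:ℝ)‖ ≤ Cz + 1 := by
      refine (norm_sub_le _ _).trans ?_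
      have := hzgb i y
      simpa using this
    exact (norm_inner_le_norm _ _).trans
      (mul_le_mul h1 (hzgb j y) (norm_nonneg _) ((norm_nonneg _).trans h1))
  have hpt : ∀ y, ∑ k, (ξ k - ∑ i, ξ i * gradient (z i) y k)^2 =
      ((∑ k, ξ k ^ 2) - ∑ i, ∑ j, ξ i * ξ j * gradient (z j) y i) + ∑ i, ∑ j, ξ i * ξ j *
        ⟪gradient (z i) y - EuclideanSpace.single i (1:ℝ), gradient (z j) y⟫ := by
    intro y
    have e1 : ∀ i j, ⟪gradient (z i) y - EuclideanSpace.single i (1:ℝ), gradient (z j) y⟫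
        = (∑ k, gradient (z i) y k * gradient (z j) y k) - gradient (z j) y i := by
      intro i j
      rw [inner_sub_left, EuclideanSpace.inner_single_left, PiLp.inner_apply]
      simp [mul_comm]
    simp only [e1]
    generalize hg : (fun i k => gradient (z i) y k) = g
    have hg' : ∀ i k, gradient (z i) y k = g i k := fun i k => by rw [← hg]
    simp only [hg']
    have e2 : ∑ i, ∑ j, ξ i * ξ j * ∑ k, g i k * g j k = ∑ k, (∑ i, ξ i * g i k) ^ 2 := by
      simp only [pow_two, Finset.sum_mul_sum]
      conv_rhs => rw [Finset.sum_comm]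
      refine Finset.sum_congr rfl fun i _ => ?_
      conv_rhs => rw [Finset.sum_comm]
      refine Finset.sum_congr rfl fun j _ => ?_
      rw [Finset.mul_sum]
      exact Finset.sum_congr rfl fun k _ => by ring
    have e3 : ∑ i, ∑ j, ξ i * ξ j * g j i = ∑ k, ξ k * ∑ i, ξ i * g i k := by
      simp only [Finset.mul_sum, mul_assoc]
    simp only [mul_sub, Finset.sum_sub_distrib]
    rw [e2, e3]
    simp only [sub_sq, Finset.sum_add_distrib, Finset.sum_sub_distrib, mul_assoc,
      ← Finset.mul_sum]
    ring
  simp only [hpt]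
  have hI1 : Integrable (fun y => ∑ i, ∑ j, ξ i * ξ j * gradient (z j) y i)
      (volume.restrict Y) :=
    integrable_finsetSum _ fun i _ => integrable_finsetSum _ fun j _ => (hint1 i j).const_mul _
  have hI2 : Integrable (fun y => ∑ i, ∑ j, ξ i * ξ j *
      ⟪gradient (z i) y - EuclideanSpace.single i (1:ℝ), gradient (z j) y⟫)
      (volume.restrict Y) :=
    integrable_finsetSum _ fun i _ => integrable_finsetSum _ fun j _ => (hint2 i j).const_mul _
  have hI3 : Integrable (fun y => (∑ k, ξ k ^ 2) - ∑ i, ∑ j, ξ i * ξ j * gradient (z j) y i)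
      (volume.restrict Y) := (integrable_const _).sub hI1
  rw [integral_add hI3 hI2, integral_sub (integrable_const _) hI1]
  have hz2 : (∫ y in Y, ∑ i, ∑ j, ξ i * ξ j *
      ⟪gradient (z i) y - EuclideanSpace.single i (1:ℝ), gradient (z j) y⟫) = 0 := by
    rw [integral_finsetSum _ fun i _ =>
      integrable_finsetSum _ fun j _ => (hint2 i j).const_mul _]
    refine Finset.sum_eq_zero fun i _ => ?_
    rw [integral_finsetSum _ fun j _ => (hint2 i j).const_mul _]
    refine Finset.sum_eq_zero fun j _ => ?_
    rw [integral_const_mul, hcell i (z j) (hz j) (hzper j) ⟨Cz, hzgb j⟩, mul_zero]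
  have hz1 : (∫ y in Y, ∑ i, ∑ j, ξ i * ξ j * gradient (z j) y i)
      = ∑ i, ∑ j, ξ i * ξ j * ∫ y in Y, gradient (z j) y i := by
    rw [integral_finsetSum _ fun i _ =>
      integrable_finsetSum _ fun j _ => (hint1 i j).const_mul _]
    refine Finset.sum_congr rfl fun i _ => ?_
    rw [integral_finsetSum _ fun j _ => (hint1 i j).const_mul _]
    refine Finset.sum_congr rfl fun j _ => ?_
    rw [integral_const_mul]
  have hV : (volume Y).toReal ≠ 0 := (ENNReal.toReal_pos hYpos.ne' hfin.ne).ne'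
  rw [hz2, hz1, add_zero, integral_const, measureReal_restrict_apply_univ, smul_eq_mul,
    Measure.real, Finset.mul_sum, Finset.mul_sum, ← Finset.sum_sub_distrib]
  refine Finset.sum_congr rfl fun i _ => ?_
  simp only [hM₀, sub_mul, Finset.sum_sub_distrib, ite_mul, one_mul, zero_mul,
    Finset.sum_ite_eq, Finset.mem_univ, if_true, mul_sub]
  congr 1
  · ring
  · rw [Finset.sum_mul, Finset.mul_sum]
    refine Finset.sum_congr rfl fun j _ => ?_
    field_simp
end

section
/- Let Y ⊂ ℝ^d be a bounded measurable set of positive Lebesgue measure |Y|, and let z_1, …, z_d : ℝ^d → ℝ be C¹, ℤ^d-periodic functions with bounded gradients such that for each i, ∫_Y (∇z_i(y) − e_i)·∇φ(y) dy = 0 for every ℤ^d-periodic C¹ function φ with bounded gradient. Define (M_0)_{ij} = δ_{ij} − (1/|Y|) ∫_Y ∂_{y_i} z_j(y) dy. Then M_0 is positive semidefinite: ξ · M_0 ξ ≥ 0 for every ξ ∈ ℝ^d. -/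
open MeasureTheory RealInnerProductSpace

theorem stmt_7 {d : ℕ} (Y : Set (EuclideanSpace ℝ (Fin d)))
    (hYm : MeasurableSet Y) (hYbd : Bornology.IsBounded Y) (hYpos : 0 < volume Y)
    (z : Fin d → EuclideanSpace ℝ (Fin d) → ℝ)
    (hz : ∀ i, ContDiff ℝ 1 (z i)) (hzper : ∀ i, ZdPeriodic (z i))
    (Cz : ℝ) (hzgb : ∀ i y, ‖gradient (z i) y‖ ≤ Cz)
    (hcell : ∀ (i : Fin d) (φ : EuclideanSpace ℝ (Fin d) → ℝ),
      ContDiff ℝ 1 φ → ZdPeriodic φ → (∃ C, ∀ y, ‖gradient φ y‖ ≤ C) →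
      (∫ y in Y, ⟪gradient (z i) y - EuclideanSpace.single i 1, gradient φ y⟫) = 0)
    (M₀ : Matrix (Fin d) (Fin d) ℝ)
    (hM₀ : ∀ i j, M₀ i j =
      (if i = j then (1:ℝ) else 0) - ((volume Y).toReal)⁻¹ * ∫ y in Y, gradient (z j) y i) :
    ∀ ξ : Fin d → ℝ, 0 ≤ ∑ i, (∑ j, M₀ i j * ξ j) * ξ i := by
  intro ξ
  have hfin : volume Y ≠ ⊤ := hYbd.measure_lt_top.ne
  have : IsFiniteMeasure (volume.restrict Y) := ⟨by simpa using hYbd.measure_lt_top⟩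
  have hV : 0 < (volume Y).toReal := ENNReal.toReal_pos hYpos.ne' hfin
  have hgc : ∀ i, Continuous (fun y => gradient (z i) y) := fun i => by
    unfold gradient
    exact (LinearIsometryEquiv.continuous _).comp ((hz i).continuous_fderiv (by norm_num))
  have hgi : ∀ i, Integrable (fun y => gradient (z i) y) (volume.restrict Y) := fun i =>
    Integrable.of_bound (hgc i).aestronglyMeasurable Cz (Filter.Eventually.of_forall (hzgb i))
  let e : Fin d → EuclideanSpace ℝ (Fin d) := fun i => EuclideanSpace.single i 1
  let w : Fin d → EuclideanSpace ℝ (Fin d) → EuclideanSpace ℝ (Fin d) :=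
    fun i y => e i - gradient (z i) y
  have hwc : ∀ i, Continuous (w i) := fun i => continuous_const.sub (hgc i)
  have hwb : ∀ i y, ‖w i y‖ ≤ ‖e i‖ + Cz := fun i y =>
    (norm_sub_le _ _).trans (by gcongr; exact hzgb i y)
  have hwi : ∀ i j, Integrable (fun y => ⟪w j y, w i y⟫) (volume.restrict Y) := fun i j =>
    Integrable.of_bound ((hwc j).inner (hwc i)).aestronglyMeasurable
      ((‖e j‖ + Cz) * (‖e i‖ + Cz)) (Filter.Eventually.of_forall fun y =>
        (norm_inner_le_norm _ _).trans (mul_le_mul (hwb j y) (hwb i y) (norm_nonneg _)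
          ((norm_nonneg _).trans (hwb j y))))
  have hci : ∀ i j, Integrable (fun y => gradient (z j) y i) (volume.restrict Y) := fun i j =>
    (EuclideanSpace.proj i : EuclideanSpace ℝ (Fin d) →L[ℝ] ℝ).integrable_comp (hgi j)
  have key : ∀ i j, M₀ i j = ((volume Y).toReal)⁻¹ * ∫ y in Y, ⟪w j y, w i y⟫ := by
    intro i j
    have h0 := hcell j (z i) (hz i) (hzper i) ⟨Cz, hzgb i⟩
    have hpt : ∀ y, ⟪gradient (z j) y - EuclideanSpace.single j 1, gradient (z i) y⟫
        = ⟪w j y, w i y⟫ - ((if i = j then (1:ℝ) else 0) - gradient (z j) y i) := by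
      intro y
      simp only [w, e, inner_sub_left, inner_sub_right, EuclideanSpace.inner_single_left,
        EuclideanSpace.inner_single_right]
      by_cases h : i = j
      · subst h; simp
      · simp [h]; ring
    simp_rw [hpt] at h0
    have hd : Integrable (fun y => (if i = j then (1:ℝ) else 0) - gradient (z j) y i)
        (volume.restrict Y) := (integrable_const _).sub (hci i j)
    rw [integral_sub (hwi i j) hd,
      integral_sub (integrable_const _) (hci i j)] at h0
    simp only [integral_const, smul_eq_mul, Measure.real, Measure.restrict_apply_univ] at h0
    rw [hM₀, sub_eq_zero.mp h0, mul_sub, inv_mul_cancel_left₀ hV.ne']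
  have hsum : ∑ i, (∑ j, M₀ i j * ξ j) * ξ i =
      ((volume Y).toReal)⁻¹ * ∫ y in Y, ⟪∑ j, ξ j • w j y, ∑ i, ξ i • w i y⟫ := by
    have hpt : ∀ y, ⟪∑ j, ξ j • w j y, ∑ i, ξ i • w i y⟫
        = ∑ i, ∑ j, (ξ j * ξ i) * ⟪w j y, w i y⟫ := by
      intro y
      rw [inner_sum]
      refine Finset.sum_congr rfl fun i _ => ?_
      rw [sum_inner]
      refine Finset.sum_congr rfl fun j _ => ?_
      rw [real_inner_smul_left, real_inner_smul_right]; ring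
    simp_rw [hpt]
    rw [integral_finsetSum _ fun i _ => integrable_finsetSum _ fun j _ => (hwi i j).const_mul _,
      Finset.mul_sum]
    refine Finset.sum_congr rfl fun i _ => ?_
    rw [integral_finsetSum _ fun j _ => (hwi i j).const_mul _, Finset.mul_sum, Finset.sum_mul]
    refine Finset.sum_congr rfl fun j _ => ?_
    rw [integral_const_mul, key]; ring
  rw [hsum]
  exact mul_nonneg (inv_nonneg.mpr hV.le) (integral_nonneg fun y => real_inner_self_nonneg)
end
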